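/- Let n ≥ 1 and let χ be an arbitrary Dirichlet character modulo n, and let s ∈ ℂ with Re s < 0. Then the series Σ_{k=1}^∞ τ(χ,k)·k^{s−1} converges absolutely and L(s,χ) = n^{1/2−s} · Y_±(s) · n^{−1/2} · Σ_{k=1}^∞ τ(χ,k)·k^{s−1}, where Y_± = Y_+ if χ(−1) = 1 (χ even) and Y_± = Y_− if χ(−1) = −1 (χ odd). -/

import Mathlib

open Complex

noncomputable section

/-- The Gauss sum `τ(χ,k) = Σ_{j mod n} χ(j) e(jk/n)`. -/
def tauChar (n : ℕ) (χ : DirichletCharacter ℂ n) (k : ℕ) : ℂ :=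
  ∑ j ∈ Finset.range n, χ (j : ZMod n) *
    Complex.exp (2 * Real.pi * Complex.I * j * k / n)

/-- `Y₊(s) = π^{s-1/2} Γ((1-s)/2)/Γ(s/2)`. -/
def Yplus (s : ℂ) : ℂ :=
  (Real.pi : ℂ) ^ (s - 1 / 2) * Complex.Gamma ((1 - s) / 2) / Complex.Gamma (s / 2)

/-- `Y₋(s) = -i π^{s-1/2} Γ((2-s)/2)/Γ((1+s)/2)`. -/
def Yminus (s : ℂ) : ℂ :=
  -Complex.I * (Real.pi : ℂ) ^ (s - 1 / 2) *
    Complex.Gamma ((2 - s) / 2) / Complex.Gamma ((1 + s) / 2)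

/-!
The sum `τ(χ, k)` is the value at `-k` of the discrete Fourier transform of `χ`, so for `Re s < 0`
the series `∑ τ(χ, k) k ^ (s - 1)` is the `L`-function at `1 - s` of the periodic function
`k ↦ 𝓕 χ (-k)`. The identity is then an instance of the functional equation of an even or odd
function `Φ` on `ZMod n`: dividing its completed form by the Archimedean Gamma factors produces
`Y₊` or `Y₋`, where for odd `Φ` the root number `i` becomes the `-i` of `Y₋` because `𝓕 Φ` is
evaluated at `-k`.
-/

lemma Yplus_eq_Gammaℝ_div_Gammaℝ (s : ℂ) : Yplus s = Gammaℝ (1 - s) / Gammaℝ s := by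
  have hπ : (Real.pi : ℂ) ^ (s - 1 / 2) =
      (Real.pi : ℂ) ^ (-(1 - s) / 2) / (Real.pi : ℂ) ^ (-s / 2) := by
    rw [← cpow_sub _ _ (ofReal_ne_zero.mpr Real.pi_ne_zero)]
    ring_nf
  rw [Yplus, hπ, Gammaℝ_def, Gammaℝ_def, div_mul_eq_mul_div, div_div]

lemma Yminus_eq_neg_I_mul_Gammaℝ_div_Gammaℝ (s : ℂ) :
    Yminus s = -I * (Gammaℝ (2 - s) / Gammaℝ (1 + s)) := by
  have hπ : (Real.pi : ℂ) ^ (s - 1 / 2) =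
      (Real.pi : ℂ) ^ (-(2 - s) / 2) / (Real.pi : ℂ) ^ (-(1 + s) / 2) := by
    rw [← cpow_sub _ _ (ofReal_ne_zero.mpr Real.pi_ne_zero)]
    ring_nf
  rw [Yminus, hπ, Gammaℝ_def, Gammaℝ_def, mul_assoc, mul_div_assoc, div_mul_eq_mul_div, div_div]

section PeriodicFunctions

open scoped ZMod

variable {n : ℕ} [NeZero n]

lemma sum_range_natCast_zmod {M : Type*} [AddCommMonoid M] (f : ZMod n → M) :
    ∑ j ∈ Finset.range n, f (j : ZMod n) = ∑ j : ZMod n, f j :=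
  Finset.sum_nbij' (fun j ↦ (j : ZMod n)) ZMod.val (by simp)
    (fun j _ ↦ Finset.mem_range.mpr (ZMod.val_lt j))
    (fun _ hj ↦ ZMod.val_cast_of_lt (Finset.mem_range.mp hj)) (by simp) (by simp)

lemma hasSum_zmod_LFunction (Φ : ZMod n → ℂ) {s : ℂ} (hs : 1 < s.re) :
    HasSum (fun k : ℕ ↦ Φ ((k + 1 : ℕ) : ZMod n) * ((k + 1 : ℕ) : ℂ) ^ (-s))
      (ZMod.LFunction Φ s) := by
  have hterms : HasSum (LSeries.term (Φ ·) s) (ZMod.LFunction Φ s) := by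
    rw [ZMod.LFunction_eq_LSeries Φ hs]
    exact (ZMod.LSeriesSummable_of_one_lt_re Φ hs).LSeriesHasSum
  rw [← hasSum_nat_add_iff' 1, Finset.sum_range_one, LSeries.term_zero, sub_zero] at hterms
  refine hterms.congr_fun fun k ↦ ?_
  rw [LSeries.term_of_ne_zero k.succ_ne_zero, cpow_neg, div_eq_mul_inv]

lemma zmod_LFunction_neg (Φ : ZMod n → ℂ) (s : ℂ) :
    ZMod.LFunction (fun k ↦ -Φ k) s = -ZMod.LFunction Φ s := by
  simp only [ZMod.LFunction, neg_mul, Finset.sum_neg_distrib, mul_neg]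

lemma zmod_LFunction_eq_Yplus_mul_of_even {Φ : ZMod n → ℂ} (hΦ : Φ.Even) {s : ℂ}
    (hs : s ≠ 0 ∨ Φ 0 = 0) (hΓ : Gammaℝ (1 - s) ≠ 0) :
    ZMod.LFunction Φ s =
      (n : ℂ) ^ (-s) * Yplus s * ZMod.LFunction (fun k ↦ 𝓕 Φ (-k)) (1 - s) := by
  have hs₁ : 1 - s ≠ 0 := fun h ↦ hΓ (Gammaℝ_eq_zero_iff.mpr ⟨0, by simp [h]⟩)
  have hdft : (𝓕 Φ).Even := ZMod.dft_even_iff.mpr hΦ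
  have hΛ : ZMod.completedLFunction Φ s =
      (n : ℂ) ^ (-s) * ZMod.completedLFunction (𝓕 Φ) (1 - s) := by
    simpa only [sub_sub_cancel, sub_sub_cancel_left] using
      ZMod.completedLFunction_one_sub_even hΦ (1 - s) (.inl hs₁)
        (hs.imp_left fun h h' ↦ h (by linear_combination -h'))
  rw [funext hdft, ZMod.LFunction_eq_completed_div_gammaFactor_even hΦ s hs,
    ZMod.LFunction_eq_completed_div_gammaFactor_even hdft (1 - s) (.inl hs₁), hΛ,
    Yplus_eq_Gammaℝ_div_Gammaℝ]
  field_simp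

lemma zmod_LFunction_eq_Yminus_mul_of_odd {Φ : ZMod n → ℂ} (hΦ : Φ.Odd) {s : ℂ}
    (hΓ : Gammaℝ (2 - s) ≠ 0) :
    ZMod.LFunction Φ s =
      (n : ℂ) ^ (-s) * Yminus s * ZMod.LFunction (fun k ↦ 𝓕 Φ (-k)) (1 - s) := by
  have hdft : (𝓕 Φ).Odd := ZMod.dft_odd_iff.mpr hΦ
  have hΛ : ZMod.completedLFunction Φ s =
      (n : ℂ) ^ (-s) * I * ZMod.completedLFunction (𝓕 Φ) (1 - s) := by
    simpa only [sub_sub_cancel, sub_sub_cancel_left] using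
      ZMod.completedLFunction_one_sub_odd hΦ (1 - s)
  rw [funext hdft, zmod_LFunction_neg, ZMod.LFunction_eq_completed_div_gammaFactor_odd hΦ s,
    ZMod.LFunction_eq_completed_div_gammaFactor_odd hdft (1 - s), hΛ,
    Yminus_eq_neg_I_mul_Gammaℝ_div_Gammaℝ, add_comm s 1, show 1 - s + 1 = 2 - s by ring]
  field_simp

end PeriodicFunctions

section GaussSums

open scoped ZMod

variable {n : ℕ} [NeZero n] (χ : DirichletCharacter ℂ n)

lemma tauChar_eq_gaussSum_mulShift (k : ℕ) :
    tauChar n χ k = gaussSum χ (ZMod.stdAddChar.mulShift (k : ZMod n)) := by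
  rw [tauChar, gaussSum, ← sum_range_natCast_zmod]
  refine Finset.sum_congr rfl fun j _ ↦ ?_
  have hexp : ZMod.stdAddChar ((k : ZMod n) * (j : ZMod n)) =
      exp (2 * Real.pi * I * j * k / n) := by
    have := ZMod.stdAddChar_coe (N := n) (k * j)
    push_cast at this
    rw [this]
    ring_nf
  rw [AddChar.mulShift_apply, hexp]

lemma tauChar_eq_dft_neg (k : ℕ) : tauChar n χ k = 𝓕 χ (-(k : ZMod n)) := by
  rw [tauChar_eq_gaussSum_mulShift, DirichletCharacter.fourierTransform_eq_gaussSum_mulShift,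
    neg_neg]

lemma hasSum_tauChar_mul_cpow {s : ℂ} (hs : s.re < 0) :
    HasSum (fun k : ℕ ↦ tauChar n χ (k + 1) * ((k + 1 : ℕ) : ℂ) ^ (s - 1))
      (ZMod.LFunction (fun k ↦ 𝓕 χ (-k)) (1 - s)) := by
  have hs' : 1 < (1 - s).re := by rw [sub_re, one_re]; linarith
  simpa only [tauChar_eq_dft_neg, neg_sub] using
    hasSum_zmod_LFunction (fun k ↦ 𝓕 χ (-k)) hs'

end GaussSums

/-- the functional equation for the `L`-function of an arbitrary (not necessarily
primitive) Dirichlet character `χ` mod `n`, relating `L(s,χ)` to the Dirichlet series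
`K(1-s,χ) = n^{-1/2} Σ_k τ(χ,k) k^{s-1}`, valid for `Re s < 0`. -/
theorem statement6
    (n : ℕ) (hn : 1 ≤ n) (χ : DirichletCharacter ℂ n)
    (s : ℂ) (hs : s.re < 0) :
    haveI : NeZero n := ⟨by omega⟩
    Summable (fun k : ℕ => ‖tauChar n χ (k + 1) * ((k + 1 : ℕ) : ℂ) ^ (s - 1)‖) ∧
    χ.LFunction s =
      (n : ℂ) ^ (1 / 2 - s) * (if χ (-1) = 1 then Yplus s else Yminus s) *
        (n : ℂ) ^ (-(1 : ℂ) / 2) *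
        ∑' k : ℕ, tauChar n χ (k + 1) * ((k + 1 : ℕ) : ℂ) ^ (s - 1) := by
  have : NeZero n := ⟨by omega⟩
  have hsum := hasSum_tauChar_mul_cpow χ hs
  have hpow : (n : ℂ) ^ (1 / 2 - s) * (n : ℂ) ^ (-(1 : ℂ) / 2) = (n : ℂ) ^ (-s) := by
    rw [← cpow_add _ _ (NeZero.ne _)]
    ring_nf
  refine ⟨hsum.summable.norm, ?_⟩
  rw [hsum.tsum_eq, mul_right_comm ((n : ℂ) ^ (1 / 2 - s)), hpow]
  rcases χ.even_or_odd with hχ | hχ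
  · have hs₀ : s ≠ 0 := by rintro rfl; exact hs.false
    have hΓ : Gammaℝ (1 - s) ≠ 0 := Gammaℝ_ne_zero_of_re_pos (by rw [sub_re, one_re]; linarith)
    rw [if_pos (show χ (-1) = 1 from hχ)]
    exact zmod_LFunction_eq_Yplus_mul_of_even hχ.to_fun (.inl hs₀) hΓ
  · have hχ₁ : χ (-1) ≠ 1 := by rw [show χ (-1) = -1 from hχ]; norm_num
    have hΓ : Gammaℝ (2 - s) ≠ 0 := Gammaℝ_ne_zero_of_re_pos (by rw [sub_re, re_ofNat]; linarith)
    rw [if_neg hχ₁]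
    exact zmod_LFunction_eq_Yminus_mul_of_odd hχ.to_fun hΓ
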